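/- For every integer m ≥ 3, the identity 1 + f_m(X) = X·f_{m-1}(X)·f_{m-2}(X)^2 holds in F_2[X]. -/

import Mathlib

open Polynomial

/-- `fibSet m` is the set of fibbinary integers below `2^m`: integers in `{0,…,2^m-1}`
whose binary representation has no two consecutive ones. -/
noncomputable def fibSet (m : ℕ) : Finset ℕ :=
  @Finset.filter _ (fun i => ∀ j : ℕ, ¬(i.testBit j ∧ i.testBit (j + 1)))
    (Classical.decPred _) (Finset.range (2 ^ m))

/-- The `m`-th fibbinary polynomial over `F_2`. -/
noncomputable def fibPoly (m : ℕ) : Polynomial (ZMod 2) :=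
  ∑ i ∈ fibSet m, X ^ i

lemma mem_fibSet (m i : ℕ) : i ∈ fibSet m ↔
    i < 2 ^ m ∧ ∀ j : ℕ, ¬(i.testBit j ∧ i.testBit (j + 1)) := by
  simp [fibSet]

lemma mem_even (m n : ℕ) : 2 * n ∈ fibSet (m + 1) ↔ n ∈ fibSet m := by
  rw [mem_fibSet, mem_fibSet]
  have e : ∀ j, (2 * n).testBit (j + 1) = n.testBit j := fun j => by
    rw [Nat.testBit_add_one]; congr 1; omega
  have e0 : (2 * n).testBit 0 = false := by simp
  refine and_congr (by rw [pow_succ]; omega) ⟨fun h j => ?_, fun h j => ?_⟩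
  · have := h (j + 1)
    rwa [e, e] at this
  · cases j with
    | zero => simp [e0]
    | succ j => rw [e, e]; exact h j

lemma mem_one (m n : ℕ) : 4 * n + 1 ∈ fibSet (m + 2) ↔ n ∈ fibSet m := by
  rw [mem_fibSet, mem_fibSet]
  have e : ∀ j, (4 * n + 1).testBit (j + 2) = n.testBit j := fun j => by
    rw [Nat.testBit_add_one, Nat.testBit_add_one]; congr 1; omega
  have e1 : (4 * n + 1).testBit 1 = false := by
    rw [Nat.testBit_add_one, Nat.testBit_zero]; simp; omega
  refine and_congr (by rw [pow_add]; omega) ⟨fun h j => ?_, fun h j => ?_⟩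
  · have := h (j + 2)
    rwa [e, show j + 2 + 1 = (j + 1) + 2 by ring, e] at this
  · match j with
    | 0 => simp [e1]
    | 1 => simp [e1]
    | j + 2 => rw [e, show j + 2 + 1 = (j + 1) + 2 by ring, e]; exact h j

lemma not_mem_three (m n : ℕ) : 4 * n + 3 ∉ fibSet m := by
  rw [mem_fibSet]
  rintro ⟨-, h⟩
  apply h 0
  rw [Nat.testBit_add_one, Nat.testBit_zero, Nat.testBit_zero]
  simp; omega

lemma fibSet_rec (m : ℕ) : fibSet (m + 2) =
    (fibSet (m + 1)).image (fun n => 2 * n) ∪ (fibSet m).image (fun n => 4 * n + 1) := by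
  ext i
  simp only [Finset.mem_union, Finset.mem_image]
  constructor
  · intro h
    have : i = 2 * (i / 2) ∨ i = 4 * (i / 4) + 1 ∨ i = 4 * (i / 4) + 3 := by omega
    rcases this with e | e | e
    · rw [e, mem_even] at h
      exact Or.inl ⟨_, h, e.symm⟩
    · rw [e, mem_one] at h
      exact Or.inr ⟨_, h, e.symm⟩
    · rw [e] at h
      exact absurd h (not_mem_three _ _)
  · rintro (⟨n, h, rfl⟩ | ⟨n, h, rfl⟩)
    · exact (mem_even _ _).2 h
    · exact (mem_one _ _).2 h

lemma fibPoly_sq (m : ℕ) : fibPoly m ^ 2 = ∑ i ∈ fibSet m, X ^ (2 * i) := by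
  rw [fibPoly, sum_pow_char 2]
  exact Finset.sum_congr rfl fun i _ => by rw [← pow_mul, mul_comm]

lemma fibPoly_four (m : ℕ) : fibPoly m ^ 4 = ∑ i ∈ fibSet m, X ^ (4 * i) := by
  rw [show 4 = 2 * 2 from rfl, pow_mul, fibPoly_sq, sum_pow_char 2]
  exact Finset.sum_congr rfl fun i _ => by rw [← pow_mul]; congr 1; ring

lemma fibPoly_rec (m : ℕ) :
    fibPoly (m + 2) = fibPoly (m + 1) ^ 2 + X * fibPoly m ^ 4 := by
  rw [fibPoly_sq, fibPoly_four, fibPoly, fibSet_rec, Finset.sum_union, Finset.sum_image,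
    Finset.sum_image, Finset.mul_sum]
  · simp only [pow_succ']
  · intro a _ b _ h; simp only at h; omega
  · intro a _ b _ h; simp only at h; omega
  · rw [Finset.disjoint_left]
    simp only [Finset.mem_image]
    rintro _ ⟨a, _, rfl⟩ ⟨b, _, h⟩
    omega

lemma fibSet_zero : fibSet 0 = {0} := by
  ext i
  rw [mem_fibSet]
  constructor
  · rintro ⟨h, -⟩; simp at h ⊢; exact h
  · intro h; simp at h; subst h; simp

lemma fibSet_one : fibSet 1 = {0, 1} := by
  ext i
  rw [mem_fibSet]
  constructor
  · rintro ⟨h, -⟩; simp; omega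
  · intro h; simp at h; rcases h with rfl | rfl <;> simp [Nat.testBit_add_one]

lemma aux (m : ℕ) :
    1 + fibPoly (m + 2) = X * fibPoly (m + 1) * fibPoly m ^ 2 := by
  have h2 : (2 : (ZMod 2)[X]) = 0 := CharTwo.two_eq_zero
  induction m with
  | zero =>
    rw [fibPoly_rec]
    simp only [fibPoly, zero_add, fibSet_zero, fibSet_one]
    simp
    linear_combination (1 + X) * h2
  | succ m ih =>
    rw [fibPoly_rec (m + 1)]
    have r := fibPoly_rec m
    simp only [show m + 1 + 1 = m + 2 from rfl]
    generalize fibPoly (m + 2) = a at *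
    generalize fibPoly (m + 1) = b at *
    generalize fibPoly m = c at *
    linear_combination (1 + a + X * b * c ^ 2) * ih - X * b ^ 2 * r - a * h2

theorem one_add_fibPoly (m : ℕ) (hm : 3 ≤ m) :
    1 + fibPoly m = X * fibPoly (m - 1) * (fibPoly (m - 2)) ^ 2 := by
  obtain ⟨k, rfl⟩ : ∃ k, m = k + 2 := ⟨m - 2, by omega⟩
  exact aux k
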